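/- Let d ≥ 3 be an integer and u_⋆(x) = (1+|x|²)^{−(d−2)/2}. For every f in D^{1,2}(ℝ^d) satisfying the orthogonality conditions ∫_{ℝ^d} f u_⋆ (1+|x|²)^{−2} dx = 0, ∫_{ℝ^d} f (1−|x|²) u_⋆ (1+|x|²)^{−3} dx = 0, and ∫_{ℝ^d} f x_i u_⋆ (1+|x|²)^{−3} dx = 0 for all i = 1, …, d, one has ∫_{ℝ^d} |∇f|² dx ≥ (d+2)(d+4) ∫_{ℝ^d} f² (1+|x|²)^{−2} dx. -/

import Mathlib

open MeasureTheory Real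

noncomputable section

/-- Surface area of the unit sphere `𝕊^{d-1} ⊆ ℝ^d`. -/
def sphereArea (d : ℕ) : ℝ := 2 * Real.pi ^ ((d : ℝ) / 2) / Real.Gamma ((d : ℝ) / 2)

/-- Green function of `-Δ` on `ℝ^d`, `d ≥ 3`: `G_d(x) = |x|^{2-d} / ((d-2)|𝕊^{d-1}|)`. -/
def greenKernel (d : ℕ) (x : EuclideanSpace ℝ (Fin d)) : ℝ :=
  ‖x‖ ^ ((2 : ℝ) - d) / (((d : ℝ) - 2) * sphereArea d)

/-- `(−Δ)⁻¹ v`, the convolution of `v` with the Green function of `-Δ` on `ℝ^d`. -/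
def invLap (d : ℕ) (v : EuclideanSpace ℝ (Fin d) → ℝ) (x : EuclideanSpace ℝ (Fin d)) : ℝ :=
  ∫ y, greenKernel d (x - y) * v y

/-- The Aubin–Talenti (optimal Sobolev) constant
`S_d = (1/(π d (d−2))) (Γ(d)/Γ(d/2))^{2/d}`. -/
def sobolevConst (d : ℕ) : ℝ :=
  1 / (Real.pi * d * ((d : ℝ) - 2)) *
    (Real.Gamma (d : ℝ) / Real.Gamma ((d : ℝ) / 2)) ^ ((2 : ℝ) / (d : ℝ))

/-- Membership in `D^{1,2}(ℝ^d)`: a (weakly) differentiable function with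
`∇u ∈ L²` and `u ∈ L^{2*}`, `2* = 2d/(d-2)`. -/
def MemD12 (d : ℕ) (u : EuclideanSpace ℝ (Fin d) → ℝ) : Prop :=
  Differentiable ℝ u ∧
  Integrable (fun x => ‖gradient u x‖ ^ 2) ∧
  Integrable (fun x => |u x| ^ (2 * (d : ℝ) / ((d : ℝ) - 2)))

/-- The `L^p` norm of `u`, written with real exponents: `(∫ |u|^p)^{1/p}`. -/
def lpNorm' {d : ℕ} (p : ℝ) (u : EuclideanSpace ℝ (Fin d) → ℝ) : ℝ :=
  (∫ x, |u x| ^ p) ^ (1 / p)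

/-- The Laplacian `Δu = ∑ ∂²u/∂x_i²`. -/
def lap (d : ℕ) (u : EuclideanSpace ℝ (Fin d) → ℝ) (x : EuclideanSpace ℝ (Fin d)) : ℝ :=
  ∑ i : Fin d, iteratedFDeriv ℝ 2 u x ![EuclideanSpace.single i 1, EuclideanSpace.single i 1]

/-- The Aubin–Talenti extremal function `u_⋆(x) = (1+|x|²)^{−(d−2)/2}`. -/
def uAT (d : ℕ) (x : EuclideanSpace ℝ (Fin d)) : ℝ :=
  (1 + ‖x‖ ^ 2) ^ (-(((d : ℝ) - 2) / 2))

/-- `f_i(x) = x_i u_⋆(x)/(1+|x|²)`, `i = 1, …, d`. -/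
def atFi (d : ℕ) (i : Fin d) (x : EuclideanSpace ℝ (Fin d)) : ℝ :=
  x i * uAT d x / (1 + ‖x‖ ^ 2)

/-- `f_{d+1}(x) = (1−|x|²) u_⋆(x)/(1+|x|²)`. -/
def atFlast (d : ℕ) (x : EuclideanSpace ℝ (Fin d)) : ℝ :=
  (1 - ‖x‖ ^ 2) * uAT d x / (1 + ‖x‖ ^ 2)

/-- Orthogonality, in `L²(ℝ^d, (1+|x|²)^{−2} dx)`, to `f_0 = u_⋆`, `f_1, …, f_d` and
`f_{d+1}`. -/
def orthAT (d : ℕ) (f : EuclideanSpace ℝ (Fin d) → ℝ) : Prop :=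
  (∫ x, f x * uAT d x / (1 + ‖x‖ ^ 2) ^ 2) = 0 ∧
  (∀ i : Fin d, (∫ x, f x * atFi d i x / (1 + ‖x‖ ^ 2) ^ 2) = 0) ∧
  (∫ x, f x * atFlast d x / (1 + ‖x‖ ^ 2) ^ 2) = 0

/-- The quadratic form `F`, the second-order expansion of the Sobolev deficit
around the Aubin–Talenti function. -/
def quadF (d : ℕ) (f : EuclideanSpace ℝ (Fin d) → ℝ) : ℝ :=
  (∫ x, ‖gradient f x‖ ^ 2) -
    (d : ℝ) * ((d : ℝ) + 2) * ∫ x, f x ^ 2 / (1 + ‖x‖ ^ 2) ^ 2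

/-- The quadratic form `G`, the second-order expansion of the Hardy-Littlewood-Sobolev
deficit around the Aubin–Talenti function. -/
def quadG (d : ℕ) (f : EuclideanSpace ℝ (Fin d) → ℝ) : ℝ :=
  1 / ((d : ℝ) * ((d : ℝ) + 2)) * (∫ x, f x ^ 2 / (1 + ‖x‖ ^ 2) ^ 2) -
    ∫ x, f x / (1 + ‖x‖ ^ 2) ^ 2 *
      invLap d (fun y => f y / (1 + ‖y‖ ^ 2) ^ 2) x

/-!
Under the stereographic projection `ℝ^d → 𝕊^d`, multiplication by `(1 + |x|²) ^ (1 - d/2)` turns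
`L²(𝕊^d)`, up to a constant, into the weighted space `L²((1 + |x|²)⁻² dx)`, and `4 L + d (d - 2)`,
with `-L` the Laplace–Beltrami operator, into `-(1 + |x|²)² Δ`.
The spherical harmonics of degree `k` are spanned by the zonal ones `g(⟪·, p⟫)`, where `g` is an
eigenvector of the Gegenbauer operator for `k (k + d - 1)`, so their lifts to `ℝ^d` are weak
eigenvectors of the energy form for `4 k (k + d - 1) + d (d - 2)`. Green's formula is justified by
cutting off, which only requires `f |∇ψ| / (1 + |x|)` to be integrable.
The lifts are dense in the weighted space, since a function orthogonal to all of them yields a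
finite signed measure on the sphere with vanishing moments along every axis.
Hence a function orthogonal to the harmonics of degree `< n` has energy at least the `n`-th
eigenvalue times its squared weighted norm, by Bessel's inequality for the energy form. For `n = 2`
the eigenvalue is `4 · 2 (d + 1) + d (d - 2) = (d + 2) (d + 4)`.
-/

section SpectralGap

variable {V H₁ H₂ : Type*} [AddCommGroup V] [Module ℝ V]
  [NormedAddCommGroup H₁] [InnerProductSpace ℝ H₁] [NormedAddCommGroup H₂] [InnerProductSpace ℝ H₂]

theorem norm_sub_sum_sq_of_pairwise_inner_eq_zero {ι : Type*} {s : Finset ι} {v : ι → H₁}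
    (hv : (s : Set ι).Pairwise fun i j ↦ inner ℝ (v i) (v j) = 0) (u : H₁) :
    ‖u - ∑ i ∈ s, v i‖ ^ 2 = ‖u‖ ^ 2 - ∑ i ∈ s, (2 * inner ℝ u (v i) - ‖v i‖ ^ 2) := by
  have norm_sum : ‖∑ i ∈ s, v i‖ ^ 2 = ∑ i ∈ s, ‖v i‖ ^ 2 := by
    simp_rw [← real_inner_self_eq_norm_sq, sum_inner, inner_sum]
    refine Finset.sum_congr rfl fun i hi ↦ ?_
    exact Finset.sum_eq_single_of_mem i hi fun j hj hji ↦ hv hi hj hji.symm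
  rw [norm_sub_sq_real, norm_sum, inner_sum, Finset.sum_sub_distrib, Finset.mul_sum]
  ring

variable {G : V →ₗ[ℝ] H₁} {J : V →ₗ[ℝ] H₂}

theorem inner_eq_zero_of_weak_eigenvectors {l₁ l₂ : ℝ} (hl : l₁ ≠ l₂) {φ ψ : V}
    (hφ : ∀ g, inner ℝ (G g) (G φ) = l₁ * inner ℝ (J g) (J φ))
    (hψ : ∀ g, inner ℝ (G g) (G ψ) = l₂ * inner ℝ (J g) (J ψ)) :
    inner ℝ (J φ) (J ψ) = 0 := by
  have h : (l₁ - l₂) * inner ℝ (J φ) (J ψ) = 0 := by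
    rw [sub_mul, ← hψ φ, real_inner_comm (J ψ), ← hφ ψ, real_inner_comm (G ψ), sub_self]
  exact (mul_eq_zero.mp h).resolve_left (sub_ne_zero.mpr hl)

/- Discarding the components `v` of `u` for which `2⟪u, v⟫ - ‖v‖²` is nonpositive only improves the
approximation, and the components of degree less than `n` are among them. -/
theorem mul_sum_le_norm_sq_of_weak_eigenvectors {l : ℕ → ℝ} (hl : StrictMono l) {n : ℕ}
    (hn : 0 ≤ l n) {ψ : ℕ → V}
    (hψ : ∀ k g, inner ℝ (G g) (G (ψ k)) = l k * inner ℝ (J g) (J (ψ k)))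
    {f : V} (hf : ∀ k < n, inner ℝ (J f) (J (ψ k)) = 0) (s : Finset ℕ) :
    l n * ∑ k ∈ s, (2 * inner ℝ (J f) (J (ψ k)) - ‖J (ψ k)‖ ^ 2) ≤ ‖G f‖ ^ 2 := by
  set gain : ℕ → ℝ := fun k ↦ 2 * inner ℝ (J f) (J (ψ k)) - ‖J (ψ k)‖ ^ 2 with gain_def
  set P := s.filter fun k ↦ 0 < gain k
  have le_of_mem_P : ∀ k ∈ P, l n ≤ l k := fun k hk ↦ by
    refine hl.monotone (le_of_not_gt fun hkn ↦ ?_)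
    have : 0 < gain k := (Finset.mem_filter.mp hk).2
    simp only [gain_def, hf k hkn] at this
    nlinarith [sq_nonneg ‖J (ψ k)‖]
  have orthogonal_G : (P : Set ℕ).Pairwise fun i j ↦ inner ℝ (G (ψ i)) (G (ψ j)) = 0 :=
    fun i _ j _ hij ↦ (hψ j (ψ i)).trans <| by
      rw [inner_eq_zero_of_weak_eigenvectors (hl.injective.ne hij) (hψ i) (hψ j), mul_zero]
  have gain_G (k : ℕ) : 2 * inner ℝ (G f) (G (ψ k)) - ‖G (ψ k)‖ ^ 2 = l k * gain k := by
    rw [gain_def, ← real_inner_self_eq_norm_sq, hψ, hψ, real_inner_self_eq_norm_sq]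
    ring
  calc l n * ∑ k ∈ s, gain k
      ≤ l n * ∑ k ∈ P, gain k := by
        refine mul_le_mul_of_nonneg_left ?_ hn
        rw [Finset.sum_filter]
        refine Finset.sum_le_sum fun k _ ↦ ?_
        split_ifs with hk
        exacts [le_rfl, not_lt.mp hk]
    _ ≤ ∑ k ∈ P, l k * gain k := by
        rw [Finset.mul_sum]
        refine Finset.sum_le_sum fun k hk ↦ ?_
        exact mul_le_mul_of_nonneg_right (le_of_mem_P k hk) (Finset.mem_filter.mp hk).2.le
    _ ≤ ‖G f‖ ^ 2 := by
        have := norm_sub_sum_sq_of_pairwise_inner_eq_zero orthogonal_G (G f)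
        simp only [gain_G] at this
        nlinarith [sq_nonneg ‖G f - ∑ k ∈ P, G (ψ k)‖]

theorem spectral_gap {l : ℕ → ℝ} (hl : StrictMono l) {n : ℕ} (hn : 0 ≤ l n)
    {W : ℕ → Submodule ℝ V}
    (hW : ∀ k, ∀ ψ ∈ W k, ∀ g, inner ℝ (G g) (G ψ) = l k * inner ℝ (J g) (J ψ))
    (dense_W : ((⨆ k, W k).map J).topologicalClosure = ⊤)
    {f : V} (hf : ∀ k < n, ∀ ψ ∈ W k, inner ℝ (J f) (J ψ) = 0) :
    l n * ‖J f‖ ^ 2 ≤ ‖G f‖ ^ 2 := by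
  have almost (w : H₂) (hw : w ∈ (⨆ k, W k).map J) :
      l n * (‖J f‖ ^ 2 - ‖J f - w‖ ^ 2) ≤ ‖G f‖ ^ 2 := by
    obtain ⟨_, hψ, rfl⟩ := hw
    obtain ⟨ψ, hψW, rfl⟩ := (Submodule.mem_iSup_iff_exists_finsupp _ _).mp hψ
    have hψ (k : ℕ) := hW k (ψ k) (hψW k)
    have orthogonal_J : (ψ.support : Set ℕ).Pairwise fun i j ↦
        inner ℝ (J (ψ i)) (J (ψ j)) = 0 := fun i _ j _ hij ↦
      inner_eq_zero_of_weak_eigenvectors (hl.injective.ne hij) (hψ i) (hψ j)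
    rw [Finsupp.sum, map_sum, norm_sub_sum_sq_of_pairwise_inner_eq_zero orthogonal_J,
      sub_sub_cancel]
    exact mul_sum_le_norm_sq_of_weak_eigenvectors hl hn hψ (fun k hk ↦ hf k hk _ (hψW k)) _
  have mem_closure : J f ∈ closure ((⨆ k, W k).map J : Set H₂) := by
    rw [← Submodule.topologicalClosure_coe, dense_W]
    trivial
  have isClosed_bound : IsClosed {w | l n * (‖J f‖ ^ 2 - ‖J f - w‖ ^ 2) ≤ ‖G f‖ ^ 2} :=
    isClosed_le (by fun_prop) continuous_const
  have bound_at_self : l n * (‖J f‖ ^ 2 - ‖J f - J f‖ ^ 2) ≤ ‖G f‖ ^ 2 :=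
    closure_minimal almost isClosed_bound mem_closure
  simpa using bound_at_self

end SpectralGap

section Gegenbauer

open Polynomial Module.End

theorem iSup_eigenspace_le_map_sub {K V ι : Type*} [Field K] [AddCommGroup V] [Module K V]
    (T : Module.End K V) {s : Set ι} {μ : ι → K} {ν : K} (hν : ∀ i ∈ s, μ i ≠ ν) :
    ⨆ i ∈ s, T.eigenspace (μ i) ≤ (⨆ i ∈ s, T.eigenspace (μ i)).map (T - algebraMap K _ ν) := by
  refine iSup₂_le fun i hi w hw ↦ ⟨(μ i - ν)⁻¹ • w, ?_, ?_⟩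
  · exact Submodule.smul_mem _ _ (Submodule.mem_iSup_of_mem i (Submodule.mem_iSup_of_mem hi hw))
  · rw [map_smul, LinearMap.sub_apply, mem_eigenspace_iff.mp hw, Module.algebraMap_end_apply,
      ← sub_smul, smul_smul, inv_mul_cancel₀ (sub_ne_zero.mpr (hν i hi)), one_smul]

/-- The Gegenbauer operator `g ↦ a X g' - (N - X²) g''`. For `a = d` it is minus the
Laplace–Beltrami operator of `𝕊^d`, acting on functions `g(⟪p, ·⟫)` with `‖p‖² = N`. -/
def gegenbauerOp (a N : ℝ) : Module.End ℝ ℝ[X] :=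
  a • LinearMap.mulLeft ℝ X ∘ₗ derivative -
    LinearMap.mulLeft ℝ (C N - X ^ 2) ∘ₗ derivative ∘ₗ derivative

/-- The eigenvalue `k (k + a - 1)` of the Gegenbauer operator on polynomials of degree `k`. -/
def gegenbauerEigenvalue (a : ℝ) (k : ℕ) : ℝ := k * (k + a - 1)

variable {a N : ℝ}

theorem gegenbauerEigenvalue_strictMono (ha : 0 < a) : StrictMono (gegenbauerEigenvalue a) := by
  refine strictMono_nat_of_lt_succ fun k ↦ ?_
  simp only [gegenbauerEigenvalue, Nat.cast_add, Nat.cast_one]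
  nlinarith [k.cast_nonneg (α := ℝ)]

theorem gegenbauerOp_apply (g : ℝ[X]) :
    gegenbauerOp a N g = a • (X * derivative g) - (C N - X ^ 2) * derivative (derivative g) := rfl

theorem coeff_gegenbauerOp (g : ℝ[X]) (n : ℕ) :
    (gegenbauerOp a N g).coeff n =
      gegenbauerEigenvalue a n * g.coeff n - N * ((n + 2) * (n + 1)) * g.coeff (n + 2) := by
  rw [gegenbauerOp_apply, sub_mul, coeff_sub, coeff_sub, coeff_smul, coeff_C_mul,
    gegenbauerEigenvalue]
  rcases n with _ | _ | n <;>
    simp [coeff_X_mul, coeff_X_pow_mul', coeff_derivative, smul_eq_mul] <;> ring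

theorem natDegree_le_of_mem_eigenspace_gegenbauerOp (ha : 0 < a) {k : ℕ} {g : ℝ[X]}
    (hg : g ∈ eigenspace (gegenbauerOp a N) (gegenbauerEigenvalue a k)) : g.natDegree ≤ k := by
  rcases eq_or_ne g 0 with rfl | hg0
  · simp
  have leading := congrArg (coeff · g.natDegree) (mem_eigenspace_iff.mp hg)
  simp only [coeff_gegenbauerOp, coeff_smul, smul_eq_mul,
    coeff_eq_zero_of_natDegree_lt (Nat.lt_add_of_pos_right two_pos), mul_zero, sub_zero] at leading
  have := mul_right_cancel₀ (by simpa using hg0) leading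
  exact ((gegenbauerEigenvalue_strictMono ha).injective this).le

theorem gegenbauerOp_X_pow_add_two (n : ℕ) :
    gegenbauerOp a N (X ^ (n + 2)) = gegenbauerEigenvalue a (n + 2) • X ^ (n + 2) -
      (N * ((n + 2) * (n + 1))) • X ^ n := by
  ext m
  rw [coeff_gegenbauerOp]
  simp only [coeff_sub, coeff_smul, coeff_X_pow, smul_eq_mul, add_left_inj]
  split_ifs <;> simp_all

/- `T X^(n+2)` equals the eigenvalue times `X^(n+2)` up to a multiple of `X^n`, which is
`(T - eigenvalue) w` for some `w` of lower degree. -/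
theorem X_pow_mem_iSup_eigenspace_gegenbauerOp (ha : 0 < a) (n : ℕ) :
    X ^ n ∈ ⨆ k ∈ Set.Iic n, eigenspace (gegenbauerOp a N) (gegenbauerEigenvalue a k) := by
  have mem_of_mem_eigenspace {n : ℕ} {g : ℝ[X]}
      (hg : g ∈ eigenspace (gegenbauerOp a N) (gegenbauerEigenvalue a n)) :
      g ∈ ⨆ k ∈ Set.Iic n, eigenspace (gegenbauerOp a N) (gegenbauerEigenvalue a k) :=
    Submodule.mem_iSup_of_mem n (Submodule.mem_iSup_of_mem Set.self_mem_Iic hg)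
  induction n using Nat.twoStepInduction with
  | zero =>
    refine mem_of_mem_eigenspace (mem_eigenspace_iff.mpr ?_)
    simp [gegenbauerOp_apply, gegenbauerEigenvalue]
  | one =>
    refine mem_of_mem_eigenspace (mem_eigenspace_iff.mpr ?_)
    simp [gegenbauerOp_apply, gegenbauerEigenvalue]
  | more n ih _ =>
    have eigenvalue_ne : ∀ k ∈ Set.Iic n,
        gegenbauerEigenvalue a k ≠ gegenbauerEigenvalue a (n + 2) := fun k hk ↦
      (gegenbauerEigenvalue_strictMono ha (by grind)).ne
    obtain ⟨w, hw, hwX⟩ := iSup_eigenspace_le_map_sub _ eigenvalue_ne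
      (Submodule.smul_mem _ (N * ((n + 2) * (n + 1))) ih)
    have eigenvector : X ^ (n + 2) + w ∈
        eigenspace (gegenbauerOp a N) (gegenbauerEigenvalue a (n + 2)) := by
      rw [LinearMap.sub_apply, Module.algebraMap_end_apply, sub_eq_iff_eq_add] at hwX
      rw [mem_eigenspace_iff, map_add, gegenbauerOp_X_pow_add_two, hwX, smul_add]
      abel
    rw [← add_sub_cancel_right (X ^ (n + 2)) w]
    refine Submodule.sub_mem _ (mem_of_mem_eigenspace eigenvector) ?_
    exact SetLike.le_def.mp (biSup_mono fun k (hk : k ≤ n) ↦ hk.trans (Nat.le_add_right n 2)) hw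

end Gegenbauer

section Divergence

open Filter Topology

variable {E : Type*} [NormedAddCommGroup E] [NormedSpace ℝ E]

/-- The divergence of a vector field, as the trace of its derivative. -/
def divergence (X : E → E) (x : E) : ℝ := LinearMap.trace ℝ E (fderiv ℝ X x)

theorem divergence_const (v x : E) : divergence (fun _ ↦ v) x = 0 := by
  simp [divergence]

theorem divergence_add {X Y : E → E} {x : E} (hX : DifferentiableAt ℝ X x)
    (hY : DifferentiableAt ℝ Y x) :
    divergence (fun y ↦ X y + Y y) x = divergence X x + divergence Y x := by
  simp [divergence, fderiv_fun_add hX hY]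

theorem exists_bound_fderiv_comp_smul {θ : E → ℝ} (hθ : ContDiff ℝ 1 θ)
    (hθs : HasCompactSupport θ) :
    ∃ M, ∀ c : ℝ, 0 < c → c ≤ 1 → ∀ x, (1 + ‖x‖) * ‖fderiv ℝ (fun y ↦ θ (c • y)) x‖ ≤ M := by
  have continuous_weighted : Continuous fun y ↦ (1 + ‖y‖) • fderiv ℝ θ y :=
    (continuous_const.add continuous_norm).smul (hθ.continuous_fderiv one_ne_zero)
  have hasCompactSupport_weighted : HasCompactSupport fun y ↦ (1 + ‖y‖) • fderiv ℝ θ y :=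
    (hθs.fderiv ℝ).smul_left (f := fun y ↦ 1 + ‖y‖)
  obtain ⟨M, hM⟩ := continuous_weighted.bounded_above_of_compact_support hasCompactSupport_weighted
  refine ⟨M, fun c hc hc1 x ↦ le_trans ?_ (hM (c • x))⟩
  rw [fderiv_comp_smul, norm_smul, norm_smul, norm_smul, ← mul_assoc, Real.norm_of_nonneg hc.le,
    Real.norm_of_nonneg (by positivity)]
  gcongr
  linarith

variable [FiniteDimensional ℝ E]

theorem divergence_id (x : E) : divergence (fun y : E ↦ y) x = Module.finrank ℝ E := by
  rw [divergence, fderiv_fun_id]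
  exact LinearMap.trace_id ℝ E

theorem divergence_smul {h : E → ℝ} {X : E → E} {x : E} (hh : DifferentiableAt ℝ h x)
    (hX : DifferentiableAt ℝ X x) :
    divergence (fun y ↦ h y • X y) x = fderiv ℝ h x (X x) + h x * divergence X x := by
  have trace_smulRight := LinearMap.trace_smulRight (fderiv ℝ h x : E →ₗ[ℝ] ℝ) (X x)
  rw [divergence, fderiv_fun_smul hh hX, ContinuousLinearMap.toLinearMap_add,
    ContinuousLinearMap.toLinearMap_smul, map_add, map_smul, add_comm, smul_eq_mul]
  exact congrArg (· + _) trace_smulRight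

theorem divergence_eq_sum_basis {ι : Type*} [Fintype ι] (b : Module.Basis ι ℝ E)
    {X : E → E} {x : E} (hX : DifferentiableAt ℝ X x) :
    divergence X x = ∑ i, fderiv ℝ (fun y ↦ b.repr (X y) i) x (b i) := by
  classical
  rw [divergence, LinearMap.trace_eq_matrix_trace ℝ b, Matrix.trace]
  refine Finset.sum_congr rfl fun i _ ↦ ?_
  have coord_comp := (b.coord i).toContinuousLinearMap.hasFDerivAt.comp x hX.hasFDerivAt
  rw [Matrix.diag_apply, LinearMap.toMatrix_apply]
  exact (DFunLike.congr_fun coord_comp.fderiv (b i)).symm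

theorem continuous_divergence {X : E → E} (hX : ContDiff ℝ 1 X) : Continuous (divergence X) := by
  have := hX.continuous_fderiv one_ne_zero
  exact (LinearMap.continuous_of_finiteDimensional
    (LinearMap.trace ℝ E ∘ₗ ContinuousLinearMap.coeLM ℝ)).comp this

variable (E) in
theorem exists_cutoff_sequence : ∃ (χ : ℕ → E → ℝ) (M : ℝ),
    (∀ n, ContDiff ℝ 1 (χ n)) ∧ (∀ n, HasCompactSupport (χ n)) ∧ (∀ n x, |χ n x| ≤ 1) ∧
    (∀ x, Tendsto (χ · x) atTop (𝓝 1)) ∧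
    (∀ n x, (1 + ‖x‖) * ‖fderiv ℝ (χ n) x‖ ≤ M) ∧
    ∀ x, Tendsto (fun n ↦ fderiv ℝ (χ n) x) atTop (𝓝 0) := by
  let θ : ContDiffBump (0 : E) := ⟨1, 2, one_pos, one_lt_two⟩
  have contDiff_θ : ContDiff ℝ 1 θ := θ.contDiff
  let c (n : ℕ) : ℝ := 1 / (n + 1)
  have c_pos (n : ℕ) : 0 < c n := Nat.one_div_pos_of_nat
  have c_le_one (n : ℕ) : c n ≤ 1 := by simpa [c] using inv_le_one_of_one_le₀ (by simp)
  have tendsto_c : Tendsto c atTop (𝓝 0) := tendsto_one_div_add_atTop_nhds_zero_nat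
  have tendsto_c_smul (x : E) : Tendsto (fun n ↦ c n • x) atTop (𝓝 0) := by
    simpa using tendsto_c.smul_const x
  obtain ⟨M, hM⟩ := exists_bound_fderiv_comp_smul contDiff_θ θ.hasCompactSupport
  refine ⟨fun n x ↦ θ (c n • x), M, fun n ↦ contDiff_θ.comp (contDiff_const_smul _),
    fun n ↦ θ.hasCompactSupport.comp_smul (c_pos n).ne', fun n x ↦ ?_, fun x ↦ ?_,
    fun n ↦ hM _ (c_pos n) (c_le_one n), fun x ↦ ?_⟩
  · rw [abs_of_nonneg θ.nonneg]
    exact θ.le_one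
  · have := (θ.continuous.tendsto 0).comp (tendsto_c_smul x)
    rwa [θ.one_of_mem_closedBall (by simp [θ])] at this
  · have := tendsto_c.smul
      (((contDiff_θ.continuous_fderiv one_ne_zero).tendsto 0).comp (tendsto_c_smul x))
    simpa only [fderiv_comp_smul, zero_smul, Function.comp_apply] using this

variable [MeasurableSpace E] [BorelSpace E] {μ : Measure E}

theorem tendsto_integral_mul_divergence_smul {f : E → ℝ} (hf : Continuous f) {X : E → E}
    (hX : ContDiff ℝ 1 X) (hfdiv : Integrable (fun x ↦ f x * divergence X x) μ)
    (hdecay : Integrable (fun x ↦ f x * ‖X x‖ / (1 + ‖x‖)) μ) {χ : ℕ → E → ℝ} {M : ℝ}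
    (contDiff_χ : ∀ n, ContDiff ℝ 1 (χ n)) (χ_le_one : ∀ n x, |χ n x| ≤ 1)
    (tendsto_χ : ∀ x, Tendsto (χ · x) atTop (𝓝 1))
    (decay_χ : ∀ n x, (1 + ‖x‖) * ‖fderiv ℝ (χ n) x‖ ≤ M)
    (tendsto_fderiv_χ : ∀ x, Tendsto (fun n ↦ fderiv ℝ (χ n) x) atTop (𝓝 0)) :
    Tendsto (fun n ↦ ∫ x, f x * divergence (fun y ↦ χ n y • X y) x ∂μ) atTop
      (𝓝 (∫ x, f x * divergence X x ∂μ)) := by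
  have divergence_χ (n : ℕ) (x : E) : divergence (fun y ↦ χ n y • X y) x =
      fderiv ℝ (χ n) x (X x) + χ n x * divergence X x :=
    divergence_smul ((contDiff_χ n).differentiable one_ne_zero x)
      (hX.differentiable one_ne_zero x)
  have fderiv_χ_le (n : ℕ) (x : E) : |fderiv ℝ (χ n) x (X x)| ≤ M * (‖X x‖ / (1 + ‖x‖)) := by
    rw [mul_div_left_comm, mul_comm]
    refine ((fderiv ℝ (χ n) x).le_opNorm _).trans ?_
    gcongr
    rw [le_div_iff₀' (by positivity)]
    exact decay_χ n x
  refine tendsto_integral_of_dominated_convergence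
    (fun x ↦ M * |f x * ‖X x‖ / (1 + ‖x‖)| + |f x * divergence X x|) (fun n ↦ ?_)
    ((hdecay.abs.const_mul M).add hfdiv.abs) (fun n ↦ .of_forall fun x ↦ ?_)
    (.of_forall fun x ↦ ?_)
  · exact (hf.mul (continuous_divergence ((contDiff_χ n).smul hX))).aestronglyMeasurable
  · rw [divergence_χ, mul_add, mul_left_comm]
    refine (norm_add_le _ _).trans (add_le_add ?_ ?_)
    · rw [norm_mul, abs_div, abs_mul, abs_norm, abs_of_pos (by positivity : 0 < 1 + ‖x‖),
        mul_div_assoc, mul_left_comm]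
      exact mul_le_mul_of_nonneg_left (fderiv_χ_le n x) (norm_nonneg _)
    · rw [norm_mul]
      exact mul_le_of_le_one_left (norm_nonneg _) (χ_le_one n x)
  · have tendsto_fderiv_apply : Tendsto (fun n ↦ fderiv ℝ (χ n) x (X x)) atTop (𝓝 0) :=
      ((ContinuousLinearMap.apply ℝ ℝ (X x)).continuous.tendsto 0).comp (tendsto_fderiv_χ x)
    simpa only [divergence_χ, zero_add, one_mul] using
      (tendsto_fderiv_apply.add ((tendsto_χ x).mul_const (divergence X x))).const_mul (f x)

variable [μ.IsAddHaarMeasure]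

theorem integral_fderiv_apply_eq_neg_integral_mul_divergence_of_hasCompactSupport {f : E → ℝ}
    (hf : Differentiable ℝ f) (hf' : LocallyIntegrable (fderiv ℝ f) μ) {X : E → E}
    (hX : ContDiff ℝ 1 X) (hXs : HasCompactSupport X) :
    ∫ x, fderiv ℝ f x (X x) ∂μ = -∫ x, f x * divergence X x ∂μ := by
  let b := Module.finBasis ℝ E
  let Xc (i : Fin (Module.finrank ℝ E)) (x : E) : ℝ := b.repr (X x) i
  have contDiff_Xc (i) : ContDiff ℝ 1 (Xc i) :=
    (b.coord i).toContinuousLinearMap.contDiff.comp hX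
  have hasCompactSupport_Xc (i) : HasCompactSupport (Xc i) :=
    hXs.comp_left (g := fun v ↦ b.repr v i) (by simp)
  have integrable_fderiv_mul (i) : Integrable (fun x ↦ fderiv ℝ f x (b i) * Xc i x) μ := by
    have : LocallyIntegrable (fun x ↦ fderiv ℝ f x (b i)) μ := fun x ↦
      (hf' x).imp fun _ h ↦ ⟨h.1, h.2.apply_continuousLinearMap (b i)⟩
    simpa only [smul_eq_mul, mul_comm] using this.integrable_smul_left_of_hasCompactSupport
      (contDiff_Xc i).continuous (hasCompactSupport_Xc i)
  have continuous_fderiv_Xc (i) : Continuous fun x ↦ fderiv ℝ (Xc i) x (b i) :=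
    ((contDiff_Xc i).continuous_fderiv one_ne_zero).clm_apply continuous_const
  have integrable_mul_fderiv (i) : Integrable (fun x ↦ f x * fderiv ℝ (Xc i) x (b i)) μ :=
    (hf.continuous.mul (continuous_fderiv_Xc i)).integrable_of_hasCompactSupport
      ((hasCompactSupport_Xc i).fderiv_apply ℝ (b i)).mul_left
  have by_parts (i) : ∫ x, f x * fderiv ℝ (Xc i) x (b i) ∂μ =
      -∫ x, fderiv ℝ f x (b i) * Xc i x ∂μ :=
    integral_mul_fderiv_eq_neg_fderiv_mul_of_integrable (integrable_fderiv_mul i)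
      (integrable_mul_fderiv i)
      ((hf.continuous.mul (contDiff_Xc i).continuous).integrable_of_hasCompactSupport
        (hasCompactSupport_Xc i).mul_left)
      (fun x _ ↦ hf x) (fun x _ ↦ (contDiff_Xc i).differentiable one_ne_zero x)
  have apply_eq_sum (x : E) : fderiv ℝ f x (X x) = ∑ i, fderiv ℝ f x (b i) * Xc i x := by
    conv_lhs => rw [← b.sum_repr (X x), map_sum]
    simp [Xc, mul_comm]
  simp_rw [apply_eq_sum, divergence_eq_sum_basis b (hX.differentiable one_ne_zero _),
    Finset.mul_sum]
  rw [integral_finsetSum _ fun i _ ↦ integrable_fderiv_mul i,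
    integral_finsetSum _ fun i _ ↦ integrable_mul_fderiv i, ← Finset.sum_neg_distrib]
  exact Finset.sum_congr rfl fun i _ ↦ by rw [by_parts i, neg_neg]

theorem integral_fderiv_apply_eq_neg_integral_mul_divergence {f : E → ℝ}
    (hf : Differentiable ℝ f) (hf' : LocallyIntegrable (fderiv ℝ f) μ) {X : E → E}
    (hX : ContDiff ℝ 1 X) (hfX : Integrable (fun x ↦ fderiv ℝ f x (X x)) μ)
    (hfdiv : Integrable (fun x ↦ f x * divergence X x) μ)
    (hdecay : Integrable (fun x ↦ f x * ‖X x‖ / (1 + ‖x‖)) μ) :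
    ∫ x, fderiv ℝ f x (X x) ∂μ = -∫ x, f x * divergence X x ∂μ := by
  obtain ⟨χ, M, contDiff_χ, compact_χ, χ_le_one, tendsto_χ, decay_χ, tendsto_fderiv_χ⟩ :=
    exists_cutoff_sequence E
  have tendsto_lhs : Tendsto (fun n ↦ ∫ x, fderiv ℝ f x (χ n x • X x) ∂μ) atTop
      (𝓝 (∫ x, fderiv ℝ f x (X x) ∂μ)) := by
    refine tendsto_integral_of_dominated_convergence (fun x ↦ ‖fderiv ℝ f x (X x)‖)
      (fun n ↦ ?_) hfX.norm (fun n ↦ .of_forall fun x ↦ ?_) (.of_forall fun x ↦ ?_)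
    · simp_rw [map_smul]
      exact (contDiff_χ n).continuous.aestronglyMeasurable.smul hfX.1
    · rw [map_smul, norm_smul]
      exact mul_le_of_le_one_left (norm_nonneg _) (χ_le_one n x)
    · simpa using (tendsto_χ x).smul_const (fderiv ℝ f x (X x))
  have tendsto_rhs : Tendsto (fun n ↦ ∫ x, f x * divergence (fun y ↦ χ n y • X y) x ∂μ) atTop
      (𝓝 (∫ x, f x * divergence X x ∂μ)) :=
    tendsto_integral_mul_divergence_smul hf.continuous hX hfdiv hdecay contDiff_χ χ_le_one tendsto_χ
      decay_χ tendsto_fderiv_χ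
  refine tendsto_nhds_unique tendsto_lhs (tendsto_rhs.neg.congr fun n ↦ ?_)
  exact (integral_fderiv_apply_eq_neg_integral_mul_divergence_of_hasCompactSupport hf hf'
    ((contDiff_χ n).smul hX) (compact_χ n).smul_right).symm

end Divergence

section MomentsDetermine

variable {α : Type*} [MeasurableSpace α] {μ : Measure α}

theorem integral_mul_cexp_eq_zero_of_forall_integral_mul_pow_eq_zero {k s : α → ℝ}
    (hk : Integrable k μ) (hs : AEStronglyMeasurable s μ) {R : ℝ} (hR : ∀ x, |s x| ≤ R)
    (moments : ∀ n : ℕ, ∫ x, k x * s x ^ n ∂μ = 0) :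
    ∫ x, (k x : ℂ) * Complex.exp (s x * Complex.I) ∂μ = 0 := by
  let F (n : ℕ) (x : α) : ℂ := (Complex.I ^ n / n.factorial) * ((k x * s x ^ n : ℝ) : ℂ)
  have integral_F (n : ℕ) : ∫ x, F n x ∂μ = 0 := by
    rw [integral_const_mul, integral_complex_ofReal, moments n, Complex.ofReal_zero, mul_zero]
  have summable_bound (x : α) : HasSum (fun n : ℕ ↦ |k x| * (R ^ n / n.factorial))
      (|k x| * Real.exp R) := by
    rw [Real.exp_eq_exp_ℝ]
    exact (NormedSpace.expSeries_div_hasSum_exp R).mul_left |k x|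
  have hasSum_F (x : α) : HasSum (F · x) (k x * Complex.exp (s x * Complex.I)) := by
    have F_eq (n : ℕ) : F n x = k x * ((s x * Complex.I) ^ n / n.factorial) := by
      simp only [F, Complex.ofReal_mul, Complex.ofReal_pow]
      ring
    simp only [F_eq, Complex.exp_eq_exp_ℂ]
    exact (NormedSpace.expSeries_div_hasSum_exp ((s x : ℂ) * Complex.I)).mul_left (k x : ℂ)
  have hasSum_integral := hasSum_integral_of_dominated_convergence
    (fun n x ↦ |k x| * (R ^ n / n.factorial)) (F := F) (μ := μ)
    (fun n ↦ ((Complex.continuous_ofReal.comp_aestronglyMeasurable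
      (hk.1.mul (hs.pow n))).const_mul _))
    (fun n ↦ .of_forall fun x ↦ ?_) (.of_forall fun x ↦ (summable_bound x).summable) ?_
    (.of_forall hasSum_F)
  · simp only [integral_F] at hasSum_integral
    exact hasSum_integral.unique hasSum_zero
  · have : |s x| ^ n ≤ R ^ n := pow_le_pow_left₀ (abs_nonneg _) (hR x) n
    simp only [F, norm_mul, norm_div, norm_pow, Complex.norm_I, one_pow, Complex.norm_natCast,
      Complex.norm_real, Real.norm_eq_abs]
    calc 1 / (n.factorial : ℝ) * (|k x| * |s x| ^ n)
        ≤ 1 / (n.factorial : ℝ) * (|k x| * R ^ n) := by gcongr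
      _ = |k x| * (R ^ n / n.factorial) := by ring
  · simp_rw [fun x ↦ (summable_bound x).tsum_eq]
    exact hk.abs.mul_const _

theorem integral_withDensity_ofReal_sub_integral_withDensity_ofReal_neg {F : Type*}
    [NormedAddCommGroup F] [NormedSpace ℝ F] {k : α → ℝ} {e : α → F} (hk : AEMeasurable k μ)
    (he : AEStronglyMeasurable e μ) (hke : Integrable (fun x ↦ k x • e x) μ) :
    ∫ x, e x ∂μ.withDensity (fun x ↦ ENNReal.ofReal (k x)) -
      ∫ x, e x ∂μ.withDensity (fun x ↦ ENNReal.ofReal (-k x)) = ∫ x, k x • e x ∂μ := by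
  have integrable_posPart (l : α → ℝ) (hl : AEMeasurable l μ) (hlk : ∀ x, |l x| = |k x|) :
      Integrable (fun x ↦ (ENNReal.ofReal (l x)).toReal • e x) μ := by
    refine hke.mono (hl.ennreal_ofReal.ennreal_toReal.aestronglyMeasurable.smul he)
      (.of_forall fun x ↦ ?_)
    rw [norm_smul, norm_smul, ENNReal.toReal_ofReal', Real.norm_of_nonneg (le_max_right _ _),
      Real.norm_eq_abs, ← hlk x]
    gcongr
    exact max_le (le_abs_self _) (abs_nonneg _)
  rw [integral_withDensity_eq_integral_toReal_smul₀ hk.ennreal_ofReal (by simp),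
    integral_withDensity_eq_integral_toReal_smul₀ hk.fun_neg.ennreal_ofReal (by simp),
    ← integral_sub (integrable_posPart k hk fun _ ↦ rfl)
      (integrable_posPart (fun x ↦ -k x) hk.neg fun x ↦ abs_neg _)]
  simp only [← sub_smul, ENNReal.toReal_ofReal', max_zero_sub_eq_self]

theorem ae_eq_zero_of_withDensity_ofReal_eq {k : α → ℝ} (hk : Integrable k μ)
    (h : μ.withDensity (fun x ↦ ENNReal.ofReal (k x)) =
      μ.withDensity fun x ↦ ENNReal.ofReal (-k x)) : k =ᵐ[μ] 0 := by
  have := (withDensity_eq_iff hk.1.aemeasurable.ennreal_ofReal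
    hk.1.aemeasurable.neg.ennreal_ofReal hk.lintegral_lt_top.ne).mp h
  filter_upwards [this] with x hx
  have posPart_eq := congrArg ENNReal.toReal hx
  simp only [ENNReal.toReal_ofReal', Pi.neg_apply] at posPart_eq
  rw [Pi.zero_apply, ← max_zero_sub_eq_self (k x), posPart_eq, sub_self]

variable {H : Type*} [NormedAddCommGroup H] [InnerProductSpace ℝ H] [CompleteSpace H]
  [SecondCountableTopology H] [MeasurableSpace H] [BorelSpace H]

theorem ae_eq_zero_of_forall_integral_mul_cexp_inner_eq_zero {Φ : α → H}
    (hΦ : MeasurableEmbedding Φ) {k : α → ℝ} (hk : Integrable k μ)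
    (fourier : ∀ p, ∫ x, (k x : ℂ) * Complex.exp (inner ℝ (Φ x) p * Complex.I) ∂μ = 0) :
    k =ᵐ[μ] 0 := by
  have : IsFiniteMeasure (μ.withDensity fun x ↦ ENNReal.ofReal (k x)) :=
    isFiniteMeasure_withDensity_ofReal hk.2
  have : IsFiniteMeasure (μ.withDensity fun x ↦ ENNReal.ofReal (-k x)) :=
    isFiniteMeasure_withDensity_ofReal hk.neg.2
  refine ae_eq_zero_of_withDensity_ofReal_eq hk ?_
  rw [← hΦ.comap_map (μ.withDensity fun x ↦ ENNReal.ofReal (k x)),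
    ← hΦ.comap_map (μ.withDensity fun x ↦ ENNReal.ofReal (-k x))]
  congr 1
  refine Measure.ext_of_charFun (funext fun p ↦ ?_)
  have measurable_exp : AEStronglyMeasurable
      (fun x ↦ Complex.exp (inner ℝ (Φ x) p * Complex.I)) μ := by
    have := hΦ.measurable
    fun_prop
  rw [charFun_apply, charFun_apply, hΦ.integral_map, hΦ.integral_map, ← sub_eq_zero,
    integral_withDensity_ofReal_sub_integral_withDensity_ofReal_neg hk.1.aemeasurable
      measurable_exp]
  · simpa only [Complex.real_smul] using fourier p
  · refine hk.norm.mono' (hk.1.smul measurable_exp) (.of_forall fun x ↦ ?_)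
    rw [norm_smul, Complex.norm_exp_ofReal_mul_I, mul_one]

theorem ae_eq_zero_of_forall_integral_mul_inner_pow_eq_zero {Φ : α → H}
    (hΦ : MeasurableEmbedding Φ) {R : ℝ} (hR : ∀ x, ‖Φ x‖ ≤ R) {k : α → ℝ} (hk : Integrable k μ)
    (moments : ∀ p, ∀ n : ℕ, ∫ x, k x * inner ℝ (Φ x) p ^ n ∂μ = 0) : k =ᵐ[μ] 0 := by
  refine ae_eq_zero_of_forall_integral_mul_cexp_inner_eq_zero hΦ hk fun p ↦ ?_
  have measurable_inner : AEStronglyMeasurable (fun x ↦ inner ℝ (Φ x) p) μ :=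
    (hΦ.measurable.inner_const).aestronglyMeasurable
  refine integral_mul_cexp_eq_zero_of_forall_integral_mul_pow_eq_zero hk measurable_inner
    (R := R * ‖p‖) (fun x ↦ ?_) (moments p)
  exact (abs_real_inner_le_norm _ _).trans (by gcongr; exact hR x)

end MomentsDetermine

section Stereographic

variable {E : Type*} [NormedAddCommGroup E] [InnerProductSpace ℝ E]

/-- The inverse stereographic projection from `E` to the unit sphere of the Hilbert sum `ℝ ⊕ E`,
normalised so that the unit sphere of `E` is mapped to the equator. -/
def invStereo (x : E) : WithLp 2 (ℝ × E) :=
  WithLp.toLp 2 ((1 - ‖x‖ ^ 2) / (1 + ‖x‖ ^ 2), (2 / (1 + ‖x‖ ^ 2)) • x)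

theorem inner_invStereo (x : E) (p : WithLp 2 (ℝ × E)) :
    inner ℝ (invStereo x) p =
      (p.fst * (1 - ‖x‖ ^ 2) + 2 * inner ℝ x p.snd) / (1 + ‖x‖ ^ 2) := by
  simp only [invStereo, WithLp.prod_inner_apply, inner_smul_left, RCLike.inner_apply,
    conj_trivial, WithLp.ofLp_fst, WithLp.ofLp_snd]
  ring

theorem norm_invStereo (x : E) : ‖invStereo x‖ = 1 := by
  have : ‖invStereo x‖ ^ 2 = 1 := by
    simp only [invStereo, WithLp.prod_norm_sq_eq_of_L2, WithLp.toLp_fst, WithLp.toLp_snd, norm_smul,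
      Real.norm_eq_abs, sq_abs, mul_pow]
    field_simp
    ring
  exact (pow_eq_one_iff_of_nonneg (norm_nonneg _) two_ne_zero).mp this

theorem abs_inner_invStereo_le (x : E) (p : WithLp 2 (ℝ × E)) :
    |inner ℝ (invStereo x) p| ≤ ‖p‖ := by
  simpa [norm_invStereo] using abs_real_inner_le_norm (invStereo x) p

theorem continuous_invStereo : Continuous (invStereo : E → WithLp 2 (ℝ × E)) := by
  unfold invStereo
  fun_prop (disch := intros; positivity)

theorem injective_invStereo : Function.Injective (invStereo : E → WithLp 2 (ℝ × E)) := by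
  refine Function.LeftInverse.injective (g := fun p ↦ (1 + p.fst)⁻¹ • p.snd) fun x ↦ ?_
  have one_add_fst : 1 + (1 - ‖x‖ ^ 2) / (1 + ‖x‖ ^ 2) = 2 / (1 + ‖x‖ ^ 2) := by
    field_simp
    ring
  simp only [invStereo, WithLp.toLp_fst, WithLp.toLp_snd]
  rw [one_add_fst, inv_smul_smul₀ (by positivity)]

theorem measurableEmbedding_invStereo [FiniteDimensional ℝ E] [MeasurableSpace E] [BorelSpace E] :
    MeasurableEmbedding (invStereo : E → WithLp 2 (ℝ × E)) :=
  continuous_invStereo.measurableEmbedding injective_invStereo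

end Stereographic

section Gradient

variable {E : Type*} [NormedAddCommGroup E] [InnerProductSpace ℝ E] [CompleteSpace E]

theorem hasGradientAt_mul {f g : E → ℝ} {f' g' x : E} (hf : HasGradientAt f f' x)
    (hg : HasGradientAt g g' x) :
    HasGradientAt (fun y ↦ f y * g y) (f x • g' + g x • f') x := by
  rw [hasGradientAt_iff_hasFDerivAt, map_add, map_smul, map_smul]
  exact hf.hasFDerivAt.mul hg.hasFDerivAt

theorem hasGradientAt_comp {φ : ℝ → ℝ} {φ' : ℝ} {f : E → ℝ} {f' x : E}
    (hφ : HasDerivAt φ φ' (f x)) (hf : HasGradientAt f f' x) :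
    HasGradientAt (fun y ↦ φ (f y)) (φ' • f') x := by
  rw [hasGradientAt_iff_hasFDerivAt, map_smul]
  exact hφ.comp_hasFDerivAt x hf.hasFDerivAt

theorem hasGradientAt_norm_sq (x : E) : HasGradientAt (fun y : E ↦ ‖y‖ ^ 2) ((2 : ℝ) • x) x := by
  rw [hasGradientAt_iff_hasFDerivAt]
  refine (hasStrictFDerivAt_norm_sq x).hasFDerivAt.congr_fderiv ?_
  ext y
  simp [two_mul]

theorem hasGradientAt_one_add_norm_sq_rpow (r : ℝ) (x : E) :
    HasGradientAt (fun y : E ↦ (1 + ‖y‖ ^ 2) ^ r) ((2 * r * (1 + ‖x‖ ^ 2) ^ (r - 1)) • x) x := by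
  have hasDerivAt_rpow : HasDerivAt (fun t : ℝ ↦ (1 + t) ^ r) (1 * r * (1 + ‖x‖ ^ 2) ^ (r - 1))
      (‖x‖ ^ 2) :=
    ((hasDerivAt_id _).const_add 1).rpow_const (Or.inl (show 1 + ‖x‖ ^ 2 ≠ 0 by positivity))
  convert hasGradientAt_comp (f := fun y : E ↦ ‖y‖ ^ 2) hasDerivAt_rpow
    (hasGradientAt_norm_sq x) using 1
  module

theorem hasGradientAt_inner_invStereo (p : WithLp 2 (ℝ × E)) (x : E) :
    HasGradientAt (fun y ↦ inner ℝ (invStereo y) p)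
      ((2 / (1 + ‖x‖ ^ 2)) • (p.snd - (inner ℝ (invStereo x) p + p.fst) • x)) x := by
  have numerator : HasGradientAt (fun y : E ↦ p.fst * (1 - ‖y‖ ^ 2) + 2 * inner ℝ y p.snd)
      ((-2 * p.fst) • x + (2 : ℝ) • p.snd) x := by
    rw [hasGradientAt_iff_hasFDerivAt]
    refine ((((hasGradientAt_norm_sq x).hasFDerivAt.const_sub 1).const_mul p.fst).add
      (((hasFDerivAt_id x).inner ℝ (hasFDerivAt_const p.snd x)).const_mul 2)).congr_fderiv ?_
    ext y
    simp only [map_smul, map_add, smul_neg, id_eq, add_apply, neg_apply, smul_apply,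
      InnerProductSpace.toDual_apply_apply, smul_eq_mul, ContinuousLinearMap.comp_apply,
      ContinuousLinearMap.prod_apply, ContinuousLinearMap.id_apply, zero_apply,
      fderivInnerCLM_apply, inner_zero_right, real_inner_comm y p.snd]
    ring
  have inverse := hasGradientAt_one_add_norm_sq_rpow (-1) x
  convert hasGradientAt_mul numerator inverse using 1
  · simp only [inner_invStereo, rpow_neg_one, div_eq_mul_inv]
  · rw [rpow_sub_one (by positivity), rpow_neg_one, inner_invStereo]
    match_scalars <;> field_simp
    ring

end Gradient

section ZonalLift

open Polynomial

variable {E : Type*} [NormedAddCommGroup E] [InnerProductSpace ℝ E]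

/-- The zonal function `g(⟪·, p⟫)` on the sphere, pulled back to `E` by the stereographic
projection, whose conformal factor is `2 / (1 + ‖x‖²)`, and weighted by `(1 + ‖x‖²) ^ r`. -/
def zonalLift (r : ℝ) (p : WithLp 2 (ℝ × E)) (g : ℝ[X]) (x : E) : ℝ :=
  (1 + ‖x‖ ^ 2) ^ r * g.eval (inner ℝ (invStereo x) p)

variable {r : ℝ} {p : WithLp 2 (ℝ × E)} {g : ℝ[X]}

theorem zonalLift_add (g₁ g₂ : ℝ[X]) :
    zonalLift r p (g₁ + g₂) = zonalLift r p g₁ + zonalLift r p g₂ := by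
  ext x
  simp only [zonalLift, eval_add, Pi.add_apply, mul_add]

theorem zonalLift_smul (c : ℝ) (g : ℝ[X]) : zonalLift r p (c • g) = c • zonalLift r p g := by
  ext x
  simp only [zonalLift, eval_smul, Pi.smul_apply, smul_eq_mul, mul_left_comm]

theorem zonalLift_div_one_add_norm_sq (x : E) :
    zonalLift r p g x / (1 + ‖x‖ ^ 2) = zonalLift (r - 1) p g x := by
  rw [zonalLift, zonalLift, rpow_sub_one (by positivity), div_mul_eq_mul_div]

theorem zonalLift_mul_one_add_norm_sq_rpow (s : ℝ) (x : E) :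
    zonalLift r p g x * (1 + ‖x‖ ^ 2) ^ s = zonalLift (r + s) p g x := by
  rw [zonalLift, zonalLift, rpow_add (by positivity), mul_right_comm]

theorem exists_abs_zonalLift_le (r : ℝ) (p : WithLp 2 (ℝ × E)) (g : ℝ[X]) :
    ∃ C, 0 ≤ C ∧ ∀ x, |zonalLift r p g x| ≤ C * (1 + ‖x‖ ^ 2) ^ r := by
  obtain ⟨C, hC⟩ := isCompact_Icc.exists_bound_of_continuousOn
    (s := Set.Icc (-‖p‖) ‖p‖) g.continuous.continuousOn
  have eval_le (x : E) := hC _ (abs_le.mp (abs_inner_invStereo_le x p))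
  refine ⟨C, (norm_nonneg _).trans (eval_le 0), fun x ↦ ?_⟩
  rw [zonalLift, abs_mul, abs_of_nonneg (by positivity), mul_comm]
  gcongr
  exact eval_le x

theorem contDiff_zonalLift {n : WithTop ℕ∞} : ContDiff ℝ n (zonalLift r p g) := by
  have contDiff_norm_sq : ContDiff ℝ n fun x : E ↦ ‖x‖ ^ 2 := contDiff_norm_sq ℝ
  have contDiff_inner : ContDiff ℝ n fun x : E ↦ inner ℝ (invStereo x) p := by
    simp only [inner_invStereo]
    exact ((contDiff_const.mul (contDiff_const.sub contDiff_norm_sq)).add (contDiff_const.mul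
      (contDiff_id.inner ℝ contDiff_const))).div (contDiff_const.add contDiff_norm_sq)
        fun x ↦ by positivity
  exact ((contDiff_const.add contDiff_norm_sq).rpow_const_of_ne fun x ↦ by positivity).mul
    ((Polynomial.contDiff_aeval g n).comp contDiff_inner)

variable [CompleteSpace E]

theorem hasGradientAt_zonalLift (r : ℝ) (p : WithLp 2 (ℝ × E)) (g : ℝ[X]) (x : E) :
    HasGradientAt (zonalLift r p g)
      (zonalLift (r - 1) p (C (2 * r) * g - 2 * (X + C p.fst) * derivative g) x • x +
        zonalLift (r - 1) p (2 * derivative g) x • p.snd) x := by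
  have product_rule : HasGradientAt (zonalLift r p g) _ x :=
    hasGradientAt_mul (hasGradientAt_one_add_norm_sq_rpow r x)
      (hasGradientAt_comp (g.hasDerivAt _) (hasGradientAt_inner_invStereo p x))
  convert product_rule using 1
  simp only [zonalLift, eval_sub, eval_mul, eval_add, eval_C, eval_X, eval_ofNat,
    rpow_sub_one (show 1 + ‖x‖ ^ 2 ≠ 0 by positivity)]
  match_scalars <;> field_simp
  ring

theorem gradient_zonalLift (r : ℝ) (p : WithLp 2 (ℝ × E)) (g : ℝ[X]) :
    gradient (zonalLift r p g) = fun x ↦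
      zonalLift (r - 1) p (C (2 * r) * g - 2 * (X + C p.fst) * derivative g) x • x +
        zonalLift (r - 1) p (2 * derivative g) x • p.snd :=
  funext fun x ↦ (hasGradientAt_zonalLift r p g x).gradient

theorem exists_norm_gradient_zonalLift_le (r : ℝ) (p : WithLp 2 (ℝ × E)) (g : ℝ[X]) :
    ∃ C, ∀ x, ‖gradient (zonalLift r p g) x‖ ≤ C * (1 + ‖x‖ ^ 2) ^ (r - 1 / 2) := by
  obtain ⟨C₁, hC₁, le₁⟩ := exists_abs_zonalLift_le (r - 1) p
    (C (2 * r) * g - 2 * (X + C p.fst) * derivative g)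
  obtain ⟨C₂, hC₂, le₂⟩ := exists_abs_zonalLift_le (r - 1) p (2 * derivative g)
  refine ⟨C₁ + C₂ * ‖p.snd‖, fun x ↦ ?_⟩
  have norm_le : ‖x‖ ≤ √(1 + ‖x‖ ^ 2) := le_sqrt_of_sq_le (by linarith)
  have one_le : 1 ≤ √(1 + ‖x‖ ^ 2) := one_le_sqrt.mpr (by linarith [sq_nonneg ‖x‖])
  rw [gradient_zonalLift, show r - 1 / 2 = r - 1 + 1 / 2 by ring, rpow_add (by positivity),
    ← sqrt_eq_rpow]
  calc
    _ ≤ C₁ * (1 + ‖x‖ ^ 2) ^ (r - 1) * ‖x‖ + C₂ * (1 + ‖x‖ ^ 2) ^ (r - 1) * ‖p.snd‖ * 1 := by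
      refine (norm_add_le _ _).trans ?_
      rw [norm_smul, norm_smul, mul_one]
      gcongr
      exacts [le₁ x, le₂ x]
    _ ≤ C₁ * (1 + ‖x‖ ^ 2) ^ (r - 1) * √(1 + ‖x‖ ^ 2) +
        C₂ * (1 + ‖x‖ ^ 2) ^ (r - 1) * ‖p.snd‖ * √(1 + ‖x‖ ^ 2) := by gcongr
    _ = _ := by ring

theorem contDiff_gradient_zonalLift {n : WithTop ℕ∞} :
    ContDiff ℝ n (gradient (zonalLift r p g)) := by
  rw [gradient_zonalLift]
  exact (contDiff_zonalLift.smul contDiff_id).add (contDiff_zonalLift.smul contDiff_const)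

end ZonalLift

section ConformalLaplacian

open Polynomial Module

variable {E : Type*} [NormedAddCommGroup E] [InnerProductSpace ℝ E] [FiniteDimensional ℝ E]

theorem divergence_gradient_zonalLift (r : ℝ) (p : WithLp 2 (ℝ × E)) (g : ℝ[X]) (x : E) :
    divergence (gradient (zonalLift r p g)) x =
      inner ℝ (gradient (zonalLift (r - 1) p (C (2 * r) * g - 2 * (X + C p.fst) * derivative g)) x)
          x +
        finrank ℝ E * zonalLift (r - 1) p (C (2 * r) * g - 2 * (X + C p.fst) * derivative g) x +
          inner ℝ (gradient (zonalLift (r - 1) p (2 * derivative g)) x) p.snd := by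
  have differentiable_zonalLift (g : ℝ[X]) : DifferentiableAt ℝ (zonalLift (r - 1) p g) x :=
    (contDiff_zonalLift (n := 1)).differentiable one_ne_zero x
  rw [gradient_zonalLift,
    divergence_add ((differentiable_zonalLift _).fun_smul differentiableAt_fun_id)
    ((differentiable_zonalLift _).fun_smul (differentiableAt_const _)),
    divergence_smul (differentiable_zonalLift _) differentiableAt_fun_id,
    divergence_smul (differentiable_zonalLift _) (differentiableAt_const _),
    divergence_id, divergence_const, inner_gradient_left, inner_gradient_left]
  ring

theorem divergence_gradient_zonalLift_of_mem_eigenspace {p : WithLp 2 (ℝ × E)} {g : ℝ[X]} {l : ℝ}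
    (hg : g ∈ End.eigenspace (gegenbauerOp (finrank ℝ E) (‖p‖ ^ 2)) l) (x : E) :
    divergence (gradient (zonalLift (1 - finrank ℝ E / 2) p g)) x =
      -(4 * l + finrank ℝ E * (finrank ℝ E - 2)) *
        zonalLift (-1 - finrank ℝ E / 2) p g x := by
  set d : ℝ := (finrank ℝ E : ℝ)
  set s := inner ℝ (invStereo x) p with hs
  have eigen := congrArg (eval s) (End.mem_eigenspace_iff.mp hg)
  have inner_snd : 2 * inner ℝ x p.snd = s * (1 + ‖x‖ ^ 2) - p.fst * (1 - ‖x‖ ^ 2) := by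
    rw [hs, inner_invStereo]
    field_simp
    ring
  have norm_sq : ‖p‖ ^ 2 = p.fst ^ 2 + ‖p.snd‖ ^ 2 := by
    rw [WithLp.prod_norm_sq_eq_of_L2, Real.norm_eq_abs, sq_abs]
  simp only [gegenbauerOp_apply, eval_sub, eval_smul, eval_mul, eval_X, eval_C, eval_pow,
    smul_eq_mul, norm_sq] at eigen
  have weight_eq : (1 + ‖x‖ ^ 2) ^ (-(d / 2)) =
      (1 + ‖x‖ ^ 2) ^ (-(d / 2) - 1) * (1 + ‖x‖ ^ 2) := by
    rw [rpow_sub_one (by positivity), div_mul_cancel₀ _ (by positivity)]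
  rw [divergence_gradient_zonalLift, gradient_zonalLift, gradient_zonalLift,
    show 1 - d / 2 - 1 = -(d / 2) by ring, show -1 - d / 2 = -(d / 2) - 1 by ring]
  simp only [inner_add_left, inner_smul_left, real_inner_self_eq_norm_sq,
    real_inner_comm x p.snd, conj_trivial, zonalLift, ← hs, weight_eq, derivative_mul,
    derivative_sub, derivative_add, derivative_X, derivative_C, derivative_ofNat, eval_add,
    eval_sub, eval_mul, eval_C, eval_X, eval_ofNat, eval_zero, eval_one]
  linear_combination (1 + ‖x‖ ^ 2) ^ (-(d / 2) - 1) *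
    (-4 * eigen - (2 * d * eval s (derivative g) +
      4 * (s + p.fst) * eval s (derivative (derivative g))) * inner_snd)

end ConformalLaplacian

section Integrability

open Module
open scoped ENNReal

variable {E : Type*} [NormedAddCommGroup E] [NormedSpace ℝ E] [FiniteDimensional ℝ E]
  [MeasurableSpace E] [BorelSpace E] {μ : Measure E} [μ.IsAddHaarMeasure]

theorem memLp_one_add_norm_sq_rpow {r : ℝ} {p : ℝ≥0∞} (hp : p ≠ 0) (hp' : p ≠ ∞)
    (hr : finrank ℝ E < -(2 * r * p.toReal)) : MemLp (fun x ↦ (1 + ‖x‖ ^ 2) ^ r) p μ := by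
  have aestronglyMeasurable : AEStronglyMeasurable (fun x : E ↦ (1 + ‖x‖ ^ 2) ^ r) μ :=
    (by fun_prop : Measurable fun x : E ↦ (1 + ‖x‖ ^ 2) ^ r).aestronglyMeasurable
  rw [← integrable_norm_rpow_iff aestronglyMeasurable hp hp']
  refine (integrable_rpow_neg_one_add_norm_sq hr).congr (.of_forall fun x ↦ ?_)
  dsimp only
  rw [Real.norm_of_nonneg (by positivity), ← rpow_mul (by positivity)]
  ring_nf

theorem memLp_of_norm_le_mul_one_add_norm_sq_rpow {F : Type*} [NormedAddCommGroup F] {h : E → F}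
    (hh : AEStronglyMeasurable h μ) {C r : ℝ} (h_le : ∀ x, ‖h x‖ ≤ C * (1 + ‖x‖ ^ 2) ^ r)
    {p : ℝ≥0∞} (hp : p ≠ 0) (hp' : p ≠ ∞) (hr : finrank ℝ E < -(2 * r * p.toReal)) :
    MemLp h p μ := by
  refine (memLp_one_add_norm_sq_rpow hp hp' hr).of_le_mul (c := C) hh (.of_forall fun x ↦ ?_)
  have weight_nonneg : 0 ≤ (1 + ‖x‖ ^ 2) ^ r := by positivity
  rw [Real.norm_of_nonneg weight_nonneg]
  exact h_le x

end Integrability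

section Admissible

open Module

variable {E : Type*} [NormedAddCommGroup E] [InnerProductSpace ℝ E]

theorem gradient_add [CompleteSpace E] {f g : E → ℝ} (hf : Differentiable ℝ f)
    (hg : Differentiable ℝ g) : gradient (f + g) = gradient f + gradient g := by
  ext1 x
  simp only [gradient, fderiv_add (hf x) (hg x), map_add, Pi.add_apply]

theorem gradient_const_smul [CompleteSpace E] (c : ℝ) (f : E → ℝ) :
    gradient (c • f) = c • gradient f := by
  ext1 x
  simp only [gradient, fderiv_const_smul_field, Pi.smul_apply, map_smulₛₗ, conj_trivial]

theorem integrable_inner_of_memLp_two {α : Type*} [MeasurableSpace α] {ν : Measure α}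
    {f g : α → E} (hf : MemLp f 2 ν) (hg : MemLp g 2 ν) :
    Integrable (fun x ↦ inner ℝ (f x) (g x)) ν := by
  refine (L2.integrable_inner (𝕜 := ℝ) (hf.toLp f) (hg.toLp g)).congr ?_
  filter_upwards [hf.coeFn_toLp, hg.coeFn_toLp] with x hfx hgx
  rw [hfx, hgx]

theorem inner_toLp {α : Type*} [MeasurableSpace α] {ν : Measure α} {f g : α → E}
    (hf : MemLp f 2 ν) (hg : MemLp g 2 ν) :
    inner ℝ (hf.toLp f) (hg.toLp g) = ∫ x, inner ℝ (f x) (g x) ∂ν := by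
  rw [L2.inner_def]
  refine integral_congr_ae ?_
  filter_upwards [hf.coeFn_toLp, hg.coeFn_toLp] with x hfx hgx
  rw [hfx, hgx]

variable [FiniteDimensional ℝ E] [MeasurableSpace E]

/-- The functions for which Green's formula against a lifted spherical harmonic holds: the energy
and the weighted `L²` norm are finite, and so is the pairing with `(1 + ‖x‖²) ^ (-d/2)`, which
bounds the derivative terms of a cutoff. -/
structure IsAdmissible (μ : Measure E) (f : E → ℝ) : Prop where
  differentiable : Differentiable ℝ f
  memLp_gradient : MemLp (gradient f) 2 μ
  memLp_div : MemLp (fun x ↦ f x / (1 + ‖x‖ ^ 2)) 2 μ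
  integrable_mul_rpow : Integrable (fun x ↦ f x * (1 + ‖x‖ ^ 2) ^ (-(finrank ℝ E / 2 : ℝ))) μ

namespace IsAdmissible

variable {μ : Measure E} {f g : E → ℝ}

theorem zero : IsAdmissible μ (0 : E → ℝ) where
  differentiable := differentiable_zero
  memLp_gradient := by
    rw [show gradient (0 : E → ℝ) = 0 from gradient_const' 0]
    exact MemLp.zero
  memLp_div := by simp
  integrable_mul_rpow := by simp

theorem add (hf : IsAdmissible μ f) (hg : IsAdmissible μ g) : IsAdmissible μ (f + g) where
  differentiable := hf.differentiable.add hg.differentiable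
  memLp_gradient := by
    rw [gradient_add hf.differentiable hg.differentiable]
    exact hf.memLp_gradient.add hg.memLp_gradient
  memLp_div := by
    simp only [Pi.add_apply, add_div]
    exact hf.memLp_div.add hg.memLp_div
  integrable_mul_rpow := by
    simp only [Pi.add_apply, add_mul]
    exact hf.integrable_mul_rpow.add hg.integrable_mul_rpow

theorem const_smul (hf : IsAdmissible μ f) (c : ℝ) : IsAdmissible μ (c • f) where
  differentiable := hf.differentiable.const_smul c
  memLp_gradient := by
    rw [gradient_const_smul]
    exact hf.memLp_gradient.const_smul c
  memLp_div := by
    simp only [Pi.smul_apply, smul_eq_mul, mul_div_assoc]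
    exact hf.memLp_div.const_mul c
  integrable_mul_rpow := by
    simp only [Pi.smul_apply, smul_eq_mul, mul_assoc]
    exact hf.integrable_mul_rpow.const_mul c

theorem integrable_mul [OpensMeasurableSpace E] (hf : IsAdmissible μ f) {h : E → ℝ}
    (hh : Continuous h) {C : ℝ}
    (h_le : ∀ x, |h x| ≤ C * (1 + ‖x‖ ^ 2) ^ (-(finrank ℝ E / 2 : ℝ))) :
    Integrable (fun x ↦ f x * h x) μ := by
  refine (hf.integrable_mul_rpow.norm.const_mul C).mono'
    (hf.differentiable.continuous.mul hh).aestronglyMeasurable (.of_forall fun x ↦ ?_)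
  have weight_nonneg : 0 ≤ (1 + ‖x‖ ^ 2) ^ (-(finrank ℝ E / 2 : ℝ)) := by positivity
  rw [norm_mul, norm_mul, Real.norm_of_nonneg weight_nonneg, mul_left_comm]
  gcongr
  exact h_le x

theorem locallyIntegrable_fderiv [IsLocallyFiniteMeasure μ]
    (hf : IsAdmissible μ f) : LocallyIntegrable (fderiv ℝ f) μ := by
  rw [← toDual_comp_gradient]
  exact ((hf.memLp_gradient.continuousLinearMap_comp
    (InnerProductSpace.toDual ℝ E).toContinuousLinearEquiv.toContinuousLinearMap)).locallyIntegrable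
      one_le_two

end IsAdmissible

/-- The space on which the energy and the weighted `L²` form are compared. -/
def admissible (μ : Measure E) : Submodule ℝ (E → ℝ) where
  carrier := {f | IsAdmissible μ f}
  zero_mem' := .zero
  add_mem' := .add
  smul_mem' c _ hf := hf.const_smul c

/-- The gradient as a map into `L²`, whose square norm is the energy. -/
def gradientL2 (μ : Measure E) : admissible μ →ₗ[ℝ] Lp E 2 μ where
  toFun f := f.2.memLp_gradient.toLp
  map_add' f g := MemLp.toLp_congr _ (f.2.memLp_gradient.add g.2.memLp_gradient)
    (.of_eq (gradient_add f.2.differentiable g.2.differentiable))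
  map_smul' c f := MemLp.toLp_congr _ (f.2.memLp_gradient.const_smul c)
    (.of_eq (gradient_const_smul c f.1))

/-- Division by `1 + ‖x‖²` as a map into `L²`, whose square norm is the weighted `L²` form. -/
def weightedL2 (μ : Measure E) : admissible μ →ₗ[ℝ] Lp ℝ 2 μ where
  toFun f := f.2.memLp_div.toLp
  map_add' f g := MemLp.toLp_congr _ (f.2.memLp_div.add g.2.memLp_div)
    (.of_forall fun x ↦ add_div (f.1 x) (g.1 x) (1 + ‖x‖ ^ 2))
  map_smul' c f := MemLp.toLp_congr _ (f.2.memLp_div.const_smul c)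
    (.of_forall fun x ↦ mul_div_assoc c (f.1 x) (1 + ‖x‖ ^ 2))

variable {μ : Measure E}

theorem inner_gradientL2 (f g : admissible μ) :
    inner ℝ (gradientL2 μ f) (gradientL2 μ g) =
      ∫ x, inner ℝ (gradient (f : E → ℝ) x) (gradient (g : E → ℝ) x) ∂μ :=
  inner_toLp f.2.memLp_gradient g.2.memLp_gradient

theorem inner_weightedL2 (f g : admissible μ) :
    inner ℝ (weightedL2 μ f) (weightedL2 μ g) =
      ∫ x, f.1 x / (1 + ‖x‖ ^ 2) * (g.1 x / (1 + ‖x‖ ^ 2)) ∂μ := by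
  refine (inner_toLp f.2.memLp_div g.2.memLp_div).trans ?_
  simp only [RCLike.inner_apply, conj_trivial, mul_comm]

end Admissible

section HarmonicLift

open Polynomial Module

variable {E : Type*} [NormedAddCommGroup E] [InnerProductSpace ℝ E] [FiniteDimensional ℝ E]
  [MeasurableSpace E] [BorelSpace E]

theorem integrable_mul_zonalLift {μ : Measure E} {f : E → ℝ} (hf : IsAdmissible μ f) {r : ℝ}
    (hr : r ≤ -(finrank ℝ E / 2)) (p : WithLp 2 (ℝ × E)) (g : ℝ[X]) :
    Integrable (fun x ↦ f x * zonalLift r p g x) μ := by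
  obtain ⟨K, hK₀, hK⟩ := exists_abs_zonalLift_le r p g
  refine hf.integrable_mul (C := K) (contDiff_zonalLift (n := 0)).continuous
    fun x ↦ (hK x).trans ?_
  gcongr
  linarith [sq_nonneg ‖x‖]

theorem integrable_mul_norm_gradient_zonalLift_div {μ : Measure E} {f : E → ℝ}
    (hf : IsAdmissible μ f) (p : WithLp 2 (ℝ × E)) (g : ℝ[X]) :
    Integrable
      (fun x ↦ f x * ‖gradient (zonalLift (1 - finrank ℝ E / 2) p g) x‖ / (1 + ‖x‖)) μ := by
  obtain ⟨K, hK⟩ := exists_norm_gradient_zonalLift_le (1 - finrank ℝ E / 2) p g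
  have K_nonneg : 0 ≤ K := by simpa using (norm_nonneg _).trans (hK 0)
  simp only [mul_div_assoc]
  refine hf.integrable_mul (C := K)
    ((contDiff_gradient_zonalLift (n := 0)).continuous.norm.div
      (continuous_const.add continuous_norm) fun x ↦ by positivity) fun x ↦ ?_
  rw [abs_of_nonneg (by positivity), div_le_iff₀ (by positivity), mul_assoc]
  refine (hK x).trans ?_
  rw [show 1 - (finrank ℝ E / 2 : ℝ) - 1 / 2 = -(finrank ℝ E / 2 : ℝ) + 1 / 2 by ring,
    rpow_add (by positivity), ← sqrt_eq_rpow]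
  gcongr
  exact sqrt_one_add_norm_sq_le x

theorem isAdmissible_zonalLift (μ : Measure E) [μ.IsAddHaarMeasure] (hE : 2 < finrank ℝ E)
    (p : WithLp 2 (ℝ × E)) (g : ℝ[X]) : IsAdmissible μ (zonalLift (1 - finrank ℝ E / 2) p g) := by
  have hd : (2 : ℝ) < finrank ℝ E := by exact_mod_cast hE
  set d : ℝ := (finrank ℝ E : ℝ)
  have continuous_zonal (r : ℝ) : Continuous (zonalLift r p g) :=
    (contDiff_zonalLift (n := 0)).continuous
  refine ⟨(contDiff_zonalLift (n := 1)).differentiable one_ne_zero, ?_, ?_, ?_⟩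
  · obtain ⟨K, hK⟩ := exists_norm_gradient_zonalLift_le (1 - d / 2) p g
    exact memLp_of_norm_le_mul_one_add_norm_sq_rpow
      (contDiff_gradient_zonalLift (n := 0)).continuous.aestronglyMeasurable hK two_ne_zero
      ENNReal.ofNat_ne_top (by rw [ENNReal.toReal_ofNat]; linarith)
  · simp only [zonalLift_div_one_add_norm_sq]
    obtain ⟨K, -, hK⟩ := exists_abs_zonalLift_le (1 - d / 2 - 1) p g
    exact memLp_of_norm_le_mul_one_add_norm_sq_rpow
      (continuous_zonal _).aestronglyMeasurable hK two_ne_zero ENNReal.ofNat_ne_top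
      (by rw [ENNReal.toReal_ofNat]; linarith)
  · simp only [zonalLift_mul_one_add_norm_sq_rpow, ← memLp_one_iff_integrable]
    obtain ⟨K, -, hK⟩ := exists_abs_zonalLift_le (1 - d / 2 + -(d / 2)) p g
    exact memLp_of_norm_le_mul_one_add_norm_sq_rpow
      (continuous_zonal _).aestronglyMeasurable hK one_ne_zero ENNReal.one_ne_top
      (by rw [ENNReal.toReal_one]; linarith)

/-- The lift `g ↦ (1 + ‖x‖²) ^ (1 - d/2) g(⟪·, p⟫)` of zonal polynomials, under which the energy on
`E` becomes the conformally invariant energy on the sphere. -/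
def admissibleZonalLift (μ : Measure E) [μ.IsAddHaarMeasure] (hE : 2 < finrank ℝ E)
    (p : WithLp 2 (ℝ × E)) : ℝ[X] →ₗ[ℝ] admissible μ where
  toFun g := ⟨zonalLift (1 - finrank ℝ E / 2) p g, isAdmissible_zonalLift μ hE p g⟩
  map_add' g₁ g₂ := Subtype.ext (zonalLift_add g₁ g₂)
  map_smul' c g := Subtype.ext (zonalLift_smul c g)

/-- The lifts of the spherical harmonics of degree `k`, spanned by the zonal ones. The axis `p` need
not be a unit vector, which makes the zonal polynomial of degree `k` depend on `‖p‖`. -/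
def harmonicLift (μ : Measure E) [μ.IsAddHaarMeasure] (hE : 2 < finrank ℝ E) (k : ℕ) :
    Submodule ℝ (admissible μ) :=
  ⨆ p, (End.eigenspace (gegenbauerOp (finrank ℝ E) (‖p‖ ^ 2))
    (gegenbauerEigenvalue (finrank ℝ E) k)).map (admissibleZonalLift μ hE p)

/-- The eigenvalue `4 k (k + d - 1) + d (d - 2)` of the energy on lifted harmonics of degree `k`:
that of the conformal Laplacian of `𝕊^d`, scaled by `4` because the weight `(1 + ‖x‖²)⁻²` is a
quarter of the squared conformal factor. -/
def harmonicEigenvalue (d : ℝ) (k : ℕ) : ℝ := 4 * gegenbauerEigenvalue d k + d * (d - 2)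

theorem harmonicEigenvalue_strictMono {d : ℝ} (hd : 0 < d) : StrictMono (harmonicEigenvalue d) :=
  ((gegenbauerEigenvalue_strictMono hd).const_mul four_pos).add_const _

variable {μ : Measure E} [μ.IsAddHaarMeasure] {hE : 2 < finrank ℝ E}

theorem integral_fderiv_gradient_zonalLift {f : E → ℝ} (hf : IsAdmissible μ f)
    (hE : 2 < finrank ℝ E) {p : WithLp 2 (ℝ × E)} {g : ℝ[X]} {l : ℝ}
    (hg : g ∈ End.eigenspace (gegenbauerOp (finrank ℝ E) (‖p‖ ^ 2)) l) :
    ∫ x, fderiv ℝ f x (gradient (zonalLift (1 - finrank ℝ E / 2) p g) x) ∂μ =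
      (4 * l + finrank ℝ E * (finrank ℝ E - 2)) *
        ∫ x, f x * zonalLift (-1 - finrank ℝ E / 2) p g x ∂μ := by
  have div_eq := divergence_gradient_zonalLift_of_mem_eigenspace hg
  have integrable_inner : Integrable
      (fun x ↦ fderiv ℝ f x (gradient (zonalLift (1 - finrank ℝ E / 2) p g) x)) μ := by
    simp only [← inner_gradient_left]
    exact integrable_inner_of_memLp_two hf.memLp_gradient
      (isAdmissible_zonalLift μ hE p g).memLp_gradient
  have integrable_div : Integrable
      (fun x ↦ f x * divergence (gradient (zonalLift (1 - finrank ℝ E / 2) p g)) x) μ := by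
    simp only [div_eq, mul_left_comm (f _)]
    exact (integrable_mul_zonalLift hf (by linarith) p g).const_mul _
  rw [integral_fderiv_apply_eq_neg_integral_mul_divergence hf.differentiable
    hf.locallyIntegrable_fderiv contDiff_gradient_zonalLift integrable_inner integrable_div
    (integrable_mul_norm_gradient_zonalLift_div hf p g)]
  simp only [div_eq, mul_left_comm (f _)]
  rw [integral_const_mul, neg_mul, neg_neg]

theorem inner_weightedL2_admissibleZonalLift (f : admissible μ) (p : WithLp 2 (ℝ × E))
    (g : ℝ[X]) :
    inner ℝ (weightedL2 μ f) (weightedL2 μ (admissibleZonalLift μ hE p g)) =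
      ∫ x, f.1 x * zonalLift (-1 - finrank ℝ E / 2) p g x ∂μ := by
  rw [inner_weightedL2]
  congr with x
  simp only [admissibleZonalLift, LinearMap.coe_mk, AddHom.coe_mk]
  rw [div_mul_eq_mul_div, mul_div_assoc, zonalLift_div_one_add_norm_sq,
    zonalLift_div_one_add_norm_sq]
  ring_nf

theorem inner_gradientL2_admissibleZonalLift (f : admissible μ) {p : WithLp 2 (ℝ × E)} {g : ℝ[X]}
    {l : ℝ} (hg : g ∈ End.eigenspace (gegenbauerOp (finrank ℝ E) (‖p‖ ^ 2)) l) :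
    inner ℝ (gradientL2 μ f) (gradientL2 μ (admissibleZonalLift μ hE p g)) =
      (4 * l + finrank ℝ E * (finrank ℝ E - 2)) *
        inner ℝ (weightedL2 μ f) (weightedL2 μ (admissibleZonalLift μ hE p g)) := by
  rw [inner_gradientL2, inner_weightedL2_admissibleZonalLift]
  simp only [inner_gradient_left]
  exact integral_fderiv_gradient_zonalLift f.2 hE hg

theorem inner_gradientL2_of_mem_harmonicLift {k : ℕ} {ψ : admissible μ}
    (hψ : ψ ∈ harmonicLift μ hE k) (f : admissible μ) :
    inner ℝ (gradientL2 μ f) (gradientL2 μ ψ) =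
      harmonicEigenvalue (finrank ℝ E) k * inner ℝ (weightedL2 μ f) (weightedL2 μ ψ) := by
  induction hψ using Submodule.iSup_induction' with
  | mem p ψ hψ =>
    obtain ⟨g, hg, rfl⟩ := hψ
    exact inner_gradientL2_admissibleZonalLift f hg
  | zero => simp only [map_zero, inner_zero_right, mul_zero]
  | add ψ₁ ψ₂ _ _ h₁ h₂ => simp only [map_add, inner_add_right, mul_add, h₁, h₂]

theorem admissibleZonalLift_X_pow_mem_iSup_harmonicLift (p : WithLp 2 (ℝ × E)) (n : ℕ) :
    admissibleZonalLift μ hE p (X ^ n) ∈ ⨆ k, harmonicLift μ hE k := by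
  have hd : (0 : ℝ) < finrank ℝ E := by exact_mod_cast two_pos.trans hE
  have mem_map := Submodule.mem_map_of_mem (f := admissibleZonalLift μ hE p)
    (X_pow_mem_iSup_eigenspace_gegenbauerOp (N := ‖p‖ ^ 2) hd n)
  simp only [Submodule.map_iSup] at mem_map
  exact (iSup₂_le fun k _ ↦ (le_iSup _ p).trans (le_iSup (harmonicLift μ hE) k)) mem_map

theorem dense_iSup_harmonicLift :
    ((⨆ k, harmonicLift μ hE k).map (weightedL2 μ)).topologicalClosure = ⊤ := by
  rw [Submodule.topologicalClosure_eq_top_iff, Submodule.eq_bot_iff]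
  intro h hh
  have memLp_weight : MemLp (fun x : E ↦ (1 + ‖x‖ ^ 2) ^ (-(finrank ℝ E / 2 : ℝ))) 2 μ := by
    refine memLp_one_add_norm_sq_rpow two_ne_zero ENNReal.ofNat_ne_top ?_
    have hd : (2 : ℝ) < finrank ℝ E := by exact_mod_cast hE
    rw [ENNReal.toReal_ofNat]
    linarith
  have moments (p : WithLp 2 (ℝ × E)) (n : ℕ) :
      ∫ x, h x * (1 + ‖x‖ ^ 2) ^ (-(finrank ℝ E / 2 : ℝ)) * inner ℝ (invStereo x) p ^ n ∂μ = 0 := by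
    have orthogonal := (Submodule.mem_orthogonal _ _).mp hh _ (Submodule.mem_map_of_mem
      (admissibleZonalLift_X_pow_mem_iSup_harmonicLift (hE := hE) p n))
    rw [← orthogonal, L2.inner_def]
    refine integral_congr_ae ?_
    filter_upwards [(admissibleZonalLift μ hE p (X ^ n)).2.memLp_div.coeFn_toLp] with x hx
    refine .trans ?_ (congrArg (fun y ↦ inner ℝ y (h x)) hx.symm)
    simp only [admissibleZonalLift, LinearMap.coe_mk, AddHom.coe_mk, zonalLift_div_one_add_norm_sq]
    simp only [zonalLift, RCLike.inner_apply, conj_trivial, eval_pow, eval_X, mul_assoc]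
    ring_nf
  have vanishes := ae_eq_zero_of_forall_integral_mul_inner_pow_eq_zero
    measurableEmbedding_invStereo (fun x : E ↦ (norm_invStereo x).le)
    ((Lp.memLp h).integrable_mul memLp_weight) moments
  rw [Lp.eq_zero_iff_ae_eq_zero]
  filter_upwards [vanishes] with x hx
  exact (mul_eq_zero.mp hx).resolve_right (by positivity)

end HarmonicLift

section Poincare

open Polynomial Module

variable {E : Type*} [NormedAddCommGroup E] [InnerProductSpace ℝ E] [FiniteDimensional ℝ E]
  [MeasurableSpace E] [BorelSpace E] {μ : Measure E}

theorem integral_mul_zonalLift_eq_zero {f : E → ℝ} (hf : IsAdmissible μ f) {r : ℝ}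
    (hr : r ≤ -(finrank ℝ E / 2)) {p : WithLp 2 (ℝ × E)} {g : ℝ[X]}
    (moments : ∀ j ≤ g.natDegree, ∫ x, f x * zonalLift r p (X ^ j) x ∂μ = 0) :
    ∫ x, f x * zonalLift r p g x ∂μ = 0 := by
  have expand (x : E) : f x * zonalLift r p g x = ∑ j ∈ Finset.range (g.natDegree + 1),
      g.coeff j * (f x * zonalLift r p (X ^ j) x) := by
    simp only [zonalLift, eval_pow, eval_X]
    rw [eval_eq_sum_range, Finset.mul_sum, Finset.mul_sum]
    exact Finset.sum_congr rfl fun j _ ↦ by ring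
  simp only [expand]
  rw [integral_finsetSum _ fun j _ ↦ (integrable_mul_zonalLift hf hr p _).const_mul _]
  refine Finset.sum_eq_zero fun j hj ↦ ?_
  rw [integral_const_mul, moments j (Finset.mem_range_succ_iff.mp hj), mul_zero]

theorem integral_mul_zonalLift_X_eq_zero {f : E → ℝ} (hf : IsAdmissible μ f) {r : ℝ}
    (hr : r ≤ -(finrank ℝ E / 2)) {ι : Type*} (b : Basis ι ℝ E)
    (vertical : ∫ x, f x * zonalLift r (WithLp.toLp 2 (1, 0)) X x ∂μ = 0)
    (horizontal : ∀ i, ∫ x, f x * zonalLift r (WithLp.toLp 2 (0, b i)) X x ∂μ = 0)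
    (p : WithLp 2 (ℝ × E)) : ∫ x, f x * zonalLift r p X x ∂μ = 0 := by
  have := FiniteDimensional.fintypeBasisIndex b
  have axis_eq : p = p.fst • WithLp.toLp 2 (1, 0) +
      ∑ i, b.repr p.snd i • WithLp.toLp 2 ((0 : ℝ), b i) := by
    apply WithLp.ofLp_injective 2
    ext1
    · simp [Prod.fst_sum]
    · simp [Prod.snd_sum, b.sum_repr]
  have expand (x : E) : f x * zonalLift r p X x =
      p.fst * (f x * zonalLift r (WithLp.toLp 2 (1, 0)) X x) +
        ∑ i, b.repr p.snd i * (f x * zonalLift r (WithLp.toLp 2 (0, b i)) X x) := by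
    simp only [zonalLift, eval_X]
    conv_lhs => rw [axis_eq, inner_add_right, inner_sum, inner_smul_right]
    simp only [inner_smul_right, mul_add, Finset.mul_sum]
    congr 1
    · ring
    · exact Finset.sum_congr rfl fun i _ ↦ by ring
  have integrable_term (p : WithLp 2 (ℝ × E)) (c : ℝ) :=
    (integrable_mul_zonalLift hf hr p X).const_mul c
  simp only [expand]
  rw [integral_add (integrable_term _ _) (integrable_finsetSum _ fun i _ ↦ integrable_term _ _),
    integral_finsetSum _ fun i _ ↦ integrable_term _ _]
  simp only [integral_const_mul, vertical, horizontal, mul_zero, Finset.sum_const_zero, add_zero]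

variable [μ.IsAddHaarMeasure]

theorem inner_weightedL2_eq_zero_of_mem_harmonicLift {hE : 2 < finrank ℝ E} {k : ℕ}
    {f ψ : admissible μ} (hψ : ψ ∈ harmonicLift μ hE k)
    (moments : ∀ p, ∀ j ≤ k, ∫ x, f.1 x * zonalLift (-1 - finrank ℝ E / 2) p (X ^ j) x ∂μ = 0) :
    inner ℝ (weightedL2 μ f) (weightedL2 μ ψ) = 0 := by
  have hd : (0 : ℝ) < finrank ℝ E := by exact_mod_cast two_pos.trans hE
  induction hψ using Submodule.iSup_induction' with
  | mem p ψ hψ =>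
    obtain ⟨g, hg, rfl⟩ := hψ
    rw [inner_weightedL2_admissibleZonalLift]
    exact integral_mul_zonalLift_eq_zero f.2 (by linarith) fun j hj ↦
      moments p j (hj.trans (natDegree_le_of_mem_eigenspace_gegenbauerOp hd hg))
  | zero => rw [map_zero, inner_zero_right]
  | add ψ₁ ψ₂ _ _ h₁ h₂ => rw [map_add, inner_add_right, h₁, h₂, add_zero]

theorem harmonicEigenvalue_mul_integral_le {f : E → ℝ} (hf : IsAdmissible μ f)
    (hE : 2 < finrank ℝ E) {n : ℕ}
    (moments : ∀ p, ∀ j < n, ∫ x, f x * zonalLift (-1 - finrank ℝ E / 2) p (X ^ j) x ∂μ = 0) :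
    harmonicEigenvalue (finrank ℝ E) n * ∫ x, f x ^ 2 / (1 + ‖x‖ ^ 2) ^ 2 ∂μ ≤
      ∫ x, ‖gradient f x‖ ^ 2 ∂μ := by
  have hd : (2 : ℝ) < finrank ℝ E := by exact_mod_cast hE
  have eigenvalue_nonneg : 0 ≤ harmonicEigenvalue (finrank ℝ E) n := by
    have eigenvalue_zero : 0 ≤ harmonicEigenvalue (finrank ℝ E) 0 := by
      simp only [harmonicEigenvalue, gegenbauerEigenvalue]
      nlinarith
    exact eigenvalue_zero.trans
      ((harmonicEigenvalue_strictMono (by linarith)).monotone n.zero_le)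
  have gap := spectral_gap (harmonicEigenvalue_strictMono (by linarith)) eigenvalue_nonneg
    (fun k ψ hψ g ↦ inner_gradientL2_of_mem_harmonicLift hψ g)
    (dense_iSup_harmonicLift (μ := μ) (hE := hE)) (f := ⟨f, hf⟩)
    fun k hk ψ hψ ↦ inner_weightedL2_eq_zero_of_mem_harmonicLift hψ
      fun p j hj ↦ moments p j (hj.trans_lt hk)
  rw [← real_inner_self_eq_norm_sq, ← real_inner_self_eq_norm_sq, inner_gradientL2,
    inner_weightedL2] at gap
  simpa only [real_inner_self_eq_norm_sq, ← sq, div_pow] using gap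

theorem isAdmissible_of_memLp {f : E → ℝ} (hE : 2 < finrank ℝ E) (hf : Differentiable ℝ f)
    (gradient_memLp : MemLp (gradient f) 2 μ)
    (div_memLp : MemLp (fun x ↦ f x / (1 + ‖x‖ ^ 2)) 2 μ)
    (memLp_sobolev : MemLp f (ENNReal.ofReal (2 * finrank ℝ E / (finrank ℝ E - 2))) μ) :
    IsAdmissible μ f := by
  refine ⟨hf, gradient_memLp, div_memLp, ?_⟩
  have hd : (2 : ℝ) < finrank ℝ E := by exact_mod_cast hE
  set d : ℝ := (finrank ℝ E : ℝ)
  have conjugate : (2 * d / (d - 2)).HolderConjugate (2 * d / (d + 2)) := by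
    rw [Real.holderConjugate_iff, lt_div_iff₀ (by linarith)]
    exact ⟨by linarith, by field_simp; ring⟩
  have := conjugate.ennrealOfReal
  refine memLp_sobolev.integrable_mul (q := ENNReal.ofReal (2 * d / (d + 2)))
    (memLp_one_add_norm_sq_rpow ?_ ENNReal.ofReal_ne_top ?_)
  · rw [ne_eq, ENNReal.ofReal_eq_zero, not_le]
    positivity
  · rw [ENNReal.toReal_ofReal (by positivity)]
    nlinarith [conjugate.symm.lt]

end Poincare

section AubinTalenti

open Polynomial Module

variable {d : ℕ} {f : EuclideanSpace ℝ (Fin d) → ℝ}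

theorem isAdmissible_of_memD12 (hd : 3 ≤ d) (hf : MemD12 d f)
    (hL2 : Integrable fun x ↦ f x ^ 2 / (1 + ‖x‖ ^ 2) ^ 2) : IsAdmissible volume f := by
  obtain ⟨differentiable_f, integrable_energy, integrable_sobolev⟩ := hf
  have continuous_f := differentiable_f.continuous
  have hd' : (2 : ℝ) < d := by exact_mod_cast hd
  refine isAdmissible_of_memLp (by rwa [finrank_euclideanSpace_fin]) differentiable_f ?_ ?_ ?_
  · have measurable_gradient : Measurable (gradient f) :=
      (InnerProductSpace.toDual ℝ _).symm.continuous.measurable.comp (measurable_fderiv ℝ f)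
    exact (memLp_two_iff_integrable_sq_norm measurable_gradient.aestronglyMeasurable).mpr
      integrable_energy
  · have continuous_div : Continuous fun x ↦ f x / (1 + ‖x‖ ^ 2) :=
      continuous_f.div (by fun_prop) fun x ↦ by positivity
    simpa only [memLp_two_iff_integrable_sq continuous_div.aestronglyMeasurable, div_pow] using hL2
  · have exponent_pos : 0 < 2 * (d : ℝ) / (d - 2) := div_pos (by linarith) (by linarith)
    rw [finrank_euclideanSpace_fin, ← integrable_norm_rpow_iff continuous_f.aestronglyMeasurable
      (by simpa using exponent_pos) ENNReal.ofReal_ne_top,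
      ENNReal.toReal_ofReal exponent_pos.le]
    exact integrable_sobolev

theorem uAT_div_sq (x : EuclideanSpace ℝ (Fin d)) :
    uAT d x / (1 + ‖x‖ ^ 2) ^ 2 = (1 + ‖x‖ ^ 2) ^ (-1 - d / 2 : ℝ) := by
  rw [uAT, ← rpow_natCast (1 + ‖x‖ ^ 2) 2, ← rpow_sub (by positivity), Nat.cast_ofNat]
  ring_nf

theorem integral_mul_zonalLift_X_pow_eq_zero_of_lt_two (hf : IsAdmissible volume f)
    (o1 : (∫ x, f x * uAT d x / (1 + ‖x‖ ^ 2) ^ 2) = 0)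
    (o2 : (∫ x, f x * (1 - ‖x‖ ^ 2) * uAT d x / (1 + ‖x‖ ^ 2) ^ 3) = 0)
    (o3 : ∀ i : Fin d, (∫ x, f x * x i * uAT d x / (1 + ‖x‖ ^ 2) ^ 3) = 0)
    (p : WithLp 2 (ℝ × EuclideanSpace ℝ (Fin d))) {j : ℕ} (hj : j < 2) :
    ∫ x, f x * zonalLift (-1 - d / 2) p (X ^ j) x = 0 := by
  interval_cases j
  · rw [← o1]
    congr with x
    rw [pow_zero, zonalLift, eval_one, ← uAT_div_sq, mul_one, mul_div_assoc]
  rw [pow_one]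
  refine integral_mul_zonalLift_X_eq_zero hf (by simp)
    (EuclideanSpace.basisFun (Fin d) ℝ).toBasis ?_ (fun i ↦ ?_) p
  · rw [← o2]
    congr with x
    rw [zonalLift, eval_X, ← uAT_div_sq, inner_invStereo]
    simp only [WithLp.toLp_fst, WithLp.toLp_snd, inner_zero_right]
    field_simp
    ring
  · refine Eq.trans ?_ ((integral_const_mul 2 _).trans (by rw [o3 i, mul_zero]))
    congr with x
    rw [zonalLift, eval_X, ← uAT_div_sq, inner_invStereo]
    simp only [WithLp.toLp_fst, WithLp.toLp_snd, OrthonormalBasis.coe_toBasis,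
      EuclideanSpace.basisFun_apply, EuclideanSpace.inner_single_right, conj_trivial]
    field_simp
    ring

end AubinTalenti

/-- weighted Poincaré inequality on `ℝ^d` for functions orthogonal to the
Aubin–Talenti function and to the images of the degree-one spherical harmonics. -/
theorem weighted_poincare (d : ℕ) (hd : 3 ≤ d)
    (f : EuclideanSpace ℝ (Fin d) → ℝ) (hf : MemD12 d f)
    (hL2 : Integrable (fun x => f x ^ 2 / (1 + ‖x‖ ^ 2) ^ 2))
    (o1 : (∫ x, f x * uAT d x / (1 + ‖x‖ ^ 2) ^ 2) = 0)
    (o2 : (∫ x, f x * (1 - ‖x‖ ^ 2) * uAT d x / (1 + ‖x‖ ^ 2) ^ 3) = 0)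
    (o3 : ∀ i : Fin d, (∫ x, f x * x i * uAT d x / (1 + ‖x‖ ^ 2) ^ 3) = 0) :
    (∫ x, ‖gradient f x‖ ^ 2) ≥
      ((d : ℝ) + 2) * ((d : ℝ) + 4) * ∫ x, f x ^ 2 / (1 + ‖x‖ ^ 2) ^ 2 := by
  have hf' : IsAdmissible volume f := isAdmissible_of_memD12 hd hf hL2
  have eigenvalue_two : harmonicEigenvalue d 2 = (d + 2) * (d + 4) := by
    rw [harmonicEigenvalue, gegenbauerEigenvalue]
    push_cast
    ring
  have two_lt_finrank : 2 < Module.finrank ℝ (EuclideanSpace ℝ (Fin d)) := by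
    rwa [finrank_euclideanSpace_fin]
  have gap := harmonicEigenvalue_mul_integral_le hf' two_lt_finrank (n := 2) fun p j hj ↦ by
    rw [finrank_euclideanSpace_fin]
    exact integral_mul_zonalLift_X_pow_eq_zero_of_lt_two hf' o1 o2 o3 p hj
  rwa [finrank_euclideanSpace_fin, eigenvalue_two] at gap
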